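/- arXiv:1705.05225 — 2 statements merged into one kernel-verified Lean document; each statement's English description precedes it below -/
import Mathlib

section
/- There exist a constant c > 0 and an integer K such that for every integer k ≥ K, setting n = 2^(2k) + 1, the number Q(n) of n-queens configurations satisfies Q(n) ≥ n^(c·n). -/
/-!
Work in a finite commutative ring `R` in which `2` is a unit and `i * i = -1`; eventually
`R = ZMod n` with `n = 4 ^ k + 1` and `i = 2 ^ k`. The linear placement `y ↦ i * y` is a toroidal
queens configuration, because `i`, `1 + i` and `1 - i` are units.

It can be modified locally. For `s ≠ 0` the four points `x, x + i s, x + (1 + i) s, x + s` form a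
square; let `f` be the 4-cycle rotating it. Then
`y + i f (f y) = (1 + i) f y` and `y - i f (f y) = (1 - i) f⁻¹ y` for all `y`, so the placement
`y ↦ i f (f y)` occupies every row, column and diagonal exactly once (`IsRotation`). This property
survives multiplication of disjoint permutations (`IsRotation.mul`), so every family of pairwise
disjoint squares gives a configuration.

It remains to count such families (`exists_many_rotations`). There are about `|R|²` squares, and
each meets at most `16 |R|` of them. Hence, for about `|R| / 32` greedy steps, at least half of the
squares are still available, so some base point `x` has at least `|R| / 2` available values of `s`.
Choosing one of these and discarding all squares that meet the chosen one gives roughly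
`(|R| / 2) ^ (|R| / 32)` permutations. They are distinct because the value at `x` recovers `s`.
-/

/-- A classical `n`-queens configuration: a permutation `σ` of `Fin n` such that
no two queens share a diagonal, i.e. for `i ≠ j`, `σ i - σ j ∉ {i - j, j - i}` as integers. -/
def IsQueens (n : ℕ) (σ : Equiv.Perm (Fin n)) : Prop :=
  ∀ i j : Fin n, i ≠ j →
    ((σ i : ℤ) - (σ j : ℤ) ≠ (i : ℤ) - (j : ℤ) ∧
     (σ i : ℤ) - (σ j : ℤ) ≠ (j : ℤ) - (i : ℤ))

/-- `Q n` is the number of classical `n`-queens configurations. -/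
noncomputable def Q (n : ℕ) : ℕ :=
  Nat.card {σ : Equiv.Perm (Fin n) // IsQueens n σ}

open Finset

section Rotations

variable {R : Type*} [CommRing R]

/-- The algebraic condition on `f` that makes `y ↦ i * f (f y)` a toroidal queens configuration:
its sum and difference diagonals are given by the bijections `(1 + i) * f` and `(1 - i) * f⁻¹`. -/
def IsRotation (i : R) (f : Equiv.Perm R) : Prop :=
  ∀ y, y + i * f (f y) = (1 + i) * f y ∧ y - i * f (f y) = (1 - i) * f⁻¹ y

theorem IsRotation.mul {i : R} {f g : Equiv.Perm R} (hf : IsRotation i f) (hg : IsRotation i g)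
    (h : f.Disjoint g) : IsRotation i (f * g) := by
  have hc : ∀ y, f (g y) = g (f y) := fun y => by
    have := congrArg (fun p : Equiv.Perm R => p y) h.commute.eq
    simpa using this
  have hinv : (f * g)⁻¹ = f⁻¹ * g⁻¹ := by rw [mul_inv_rev, h.inv_left.inv_right.commute.eq]
  intro y
  rcases h y with hy | hy
  · have h1 : (f * g) y = g y := by rw [Equiv.Perm.mul_apply, hc, hy]
    have h2 : (f * g) (g y) = g (g y) := by
      rw [Equiv.Perm.mul_apply, hc, hc, hy]
    have h3 : (f * g)⁻¹ y = g⁻¹ y := by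
      rw [mul_inv_rev, Equiv.Perm.mul_apply, Equiv.Perm.inv_eq_iff_eq.2 hy.symm]
    rw [h1, h2, h3]
    exact hg y
  · have h1 : (f * g) y = f y := by rw [Equiv.Perm.mul_apply, hy]
    have h2 : (f * g) (f y) = f (f y) := by
      rw [Equiv.Perm.mul_apply, ← hc, hy]
    have h3 : (f * g)⁻¹ y = f⁻¹ y := by
      rw [hinv, Equiv.Perm.mul_apply, Equiv.Perm.inv_eq_iff_eq.2 hy.symm]
    rw [h1, h2, h3]
    exact hf y

variable [DecidableEq R]

/-- The square with base corner `p.1` and side `p.2`. -/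
def square (i : R) (p : R × R) : Finset R :=
  ({0, i, 1 + i, 1} : Finset R).image fun c => p.1 + c * p.2

/-- For `p.2 ≠ 0`, the 4-cycle rotating the corners of `square i p`. -/
def squareCycle (i : R) (p : R × R) : Equiv.Perm R :=
  Equiv.swap p.1 (p.1 + i * p.2) * Equiv.swap (p.1 + i * p.2) (p.1 + (1 + i) * p.2) *
    Equiv.swap (p.1 + (1 + i) * p.2) (p.1 + p.2)

theorem mem_square {i : R} {p : R × R} {y : R} : y ∈ square i p ↔
    y = p.1 ∨ y = p.1 + i * p.2 ∨ y = p.1 + (1 + i) * p.2 ∨ y = p.1 + p.2 := by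
  simp [square]

theorem card_square_le (i : R) (p : R × R) : #(square i p) ≤ 4 :=
  card_image_le.trans card_le_four

theorem squareCycle_of_notMem {i : R} {p : R × R} {y : R} (h : y ∉ square i p) :
    squareCycle i p y = y := by
  simp only [mem_square, not_or] at h
  obtain ⟨h0, h1, h2, h3⟩ := h
  simp [squareCycle, Equiv.swap_apply_of_ne_of_ne, *]

/-- If `2` is a unit, the four corners of a square of nonzero side are distinct, so that
`squareCycle` permutes them cyclically. -/
theorem squareCycle_corners {i : R} (hi : i * i = -1) (h2 : IsUnit (2 : R)) {x s : R}
    (hs : s ≠ 0) :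
    squareCycle i (x, s) x = x + i * s ∧
    squareCycle i (x, s) (x + i * s) = x + (1 + i) * s ∧
    squareCycle i (x, s) (x + (1 + i) * s) = x + s ∧
    squareCycle i (x, s) (x + s) = x := by
  have hi0 : i * s ≠ 0 := fun h => hs (by linear_combination (-i) * h + s * hi)
  have hp : (1 + i) * s ≠ 0 := fun h => hs (h2.mul_left_cancel (by
    linear_combination (1 - i) * h + s * hi))
  have hm : (1 - i) * s ≠ 0 := fun h => hs (h2.mul_left_cancel (by
    linear_combination (1 + i) * h + s * hi))
  have e01 : x ≠ x + i * s := fun h => hi0 (by linear_combination -h)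
  have e02 : x ≠ x + (1 + i) * s := fun h => hp (by linear_combination -h)
  have e03 : x ≠ x + s := fun h => hs (by linear_combination -h)
  have e12 : x + i * s ≠ x + (1 + i) * s := fun h => hs (by linear_combination -h)
  have e13 : x + i * s ≠ x + s := fun h => hm (by linear_combination -h)
  have e23 : x + (1 + i) * s ≠ x + s := fun h => hi0 (by linear_combination h)
  simp only [squareCycle, Equiv.Perm.mul_apply]
  refine ⟨?_, ?_, ?_, ?_⟩
  · rw [Equiv.swap_apply_of_ne_of_ne e02 e03, Equiv.swap_apply_of_ne_of_ne e01 e02,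
      Equiv.swap_apply_left]
  · rw [Equiv.swap_apply_of_ne_of_ne e12 e13, Equiv.swap_apply_left,
      Equiv.swap_apply_of_ne_of_ne e02.symm e12.symm]
  · rw [Equiv.swap_apply_left, Equiv.swap_apply_of_ne_of_ne e13.symm e23.symm,
      Equiv.swap_apply_of_ne_of_ne e03.symm e13.symm]
  · rw [Equiv.swap_apply_right, Equiv.swap_apply_right, Equiv.swap_apply_right]

theorem isRotation_squareCycle {i : R} (hi : i * i = -1) (h2 : IsUnit (2 : R)) {x s : R}
    (hs : s ≠ 0) : IsRotation i (squareCycle i (x, s)) := by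
  obtain ⟨c0, c1, c2, c3⟩ := squareCycle_corners hi h2 (x := x) hs
  intro y
  by_cases hy : y ∈ square i (x, s)
  · rw [mem_square] at hy
    rcases hy with rfl | rfl | rfl | rfl
    · rw [c0, c1, Equiv.Perm.inv_eq_iff_eq.2 c3.symm]
      constructor
      · ring
      · linear_combination (-s) * hi
    · rw [c1, c2, Equiv.Perm.inv_eq_iff_eq.2 c0.symm]
      constructor
      · linear_combination (-s) * hi
      · ring
    · rw [c2, c3, Equiv.Perm.inv_eq_iff_eq.2 c1.symm]
      constructor
      · ring
      · linear_combination s * hi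
    · rw [c3, c0, Equiv.Perm.inv_eq_iff_eq.2 c2.symm]
      constructor
      · linear_combination s * hi
      · ring
  · have h := squareCycle_of_notMem hy
    rw [h, h, Equiv.Perm.inv_eq_iff_eq.2 h.symm]
    constructor <;> ring

variable [Fintype R]

/-- A point lies in at most `4 |R|` squares: the side and the corner role of the point determine
the square. -/
theorem card_squares_through_le (i a : R) :
    #{p : R × R | a ∈ square i p} ≤ 4 * Fintype.card R := by
  have hsub : ({p : R × R | a ∈ square i p} : Finset (R × R)) ⊆
      (({0, i, 1 + i, 1} : Finset R) ×ˢ (univ : Finset R)).image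
        fun cs => (a - cs.1 * cs.2, cs.2) := by
    rintro ⟨x, s⟩ hp
    simp only [mem_filter, mem_univ, true_and, square, mem_image] at hp
    obtain ⟨c, hc, h⟩ := hp
    refine mem_image.2 ⟨(c, s), mem_product.2 ⟨hc, mem_univ _⟩, ?_⟩
    simp [← h]
  refine (card_le_card hsub).trans (card_image_le.trans ?_)
  rw [card_product, card_univ]
  exact Nat.mul_le_mul_right _ card_le_four

theorem card_squares_meeting_le (i : R) (g : R × R) :
    #{p : R × R | ¬ Disjoint (square i p) (square i g)} ≤ 16 * Fintype.card R := by
  have hsub : ({p : R × R | ¬ Disjoint (square i p) (square i g)} : Finset (R × R)) ⊆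
      (square i g).biUnion fun a => {p : R × R | a ∈ square i p} := by
    intro p hp
    simp only [mem_filter, mem_univ, true_and, not_disjoint_iff] at hp
    obtain ⟨a, ha, hb⟩ := hp
    exact mem_biUnion.2 ⟨a, hb, by simpa using ha⟩
  refine (card_le_card hsub).trans
    ((card_biUnion_le_card_mul _ _ _ fun a _ => card_squares_through_le i a).trans ?_)
  have := Nat.mul_le_mul_right (4 * Fintype.card R) (card_square_le i g)
  linarith

/-- Greedy counting, with `W` the set of squares still available: `m` steps can be made, each with
at least `q` choices. The last clause, that the permutations move only points covered by `W`, is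
what makes the squares discarded at one step irrelevant to all later ones. -/
theorem exists_many_rotations {i : R} (hi : i * i = -1) (h2 : IsUnit (2 : R)) (q m : ℕ) :
    ∀ W : Finset (R × R), (∀ p ∈ W, p.2 ≠ 0) →
      m * (16 * Fintype.card R) + q * Fintype.card R ≤ #W →
      ∃ S : Finset (Equiv.Perm R), q ^ m ≤ #S ∧
        ∀ f ∈ S, IsRotation i f ∧ ∀ y, f y ≠ y → ∃ p ∈ W, y ∈ square i p := by
  induction m with
  | zero =>
    intro W _ _
    refine ⟨{1}, by simp, fun f hf => ?_⟩
    rw [mem_singleton.1 hf]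
    exact ⟨fun y => by constructor <;> simp <;> ring, fun y hy => (hy rfl).elim⟩
  | succ m ih =>
    intro W hW hcard
    have hne : (univ : Finset R).Nonempty := ⟨0, mem_univ _⟩
    obtain ⟨x, -, hx⟩ := exists_le_card_fiber_of_mul_le_card_of_maps_to
      (s := W) (t := univ) (f := Prod.fst) (n := q) (fun _ _ => mem_univ _) hne (by
        rw [card_univ]; linarith [Nat.zero_le ((m + 1) * (16 * Fintype.card R))])
    set A : Finset R := {s | (x, s) ∈ W} with hA
    have hqA : q ≤ #A := by
      refine hx.trans (card_le_card_of_injOn Prod.snd ?_ ?_)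
      · rintro ⟨x', s⟩ hp
        simp only [coe_filter, Set.mem_ofPred_eq] at hp
        obtain ⟨hp, rfl⟩ := hp
        simpa [hA] using hp
      · rintro ⟨x1, s1⟩ h1 ⟨x2, s2⟩ h2 h
        simp only [coe_filter, Set.mem_ofPred_eq] at h1 h2 h
        rw [h1.2, h2.2, h]
    have hmemA : ∀ s ∈ A, (x, s) ∈ W := fun s hs => by simpa [hA] using hs
    have step : ∀ s : R, ∃ S : Finset (Equiv.Perm R), q ^ m ≤ #S ∧ ∀ f ∈ S, IsRotation i f ∧
        ∀ y, f y ≠ y → ∃ p ∈ W, Disjoint (square i p) (square i (x, s)) ∧ y ∈ square i p := by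
      intro s
      obtain ⟨S, hS, hS'⟩ := ih (W.filter fun p => Disjoint (square i p) (square i (x, s)))
        (fun p hp => hW p (mem_filter.1 hp).1) (by
          have h1 := card_filter_add_card_filter_not (s := W)
            (fun p => Disjoint (square i p) (square i (x, s)))
          have h3 : #(W.filter fun p => ¬ Disjoint (square i p) (square i (x, s))) ≤
              16 * Fintype.card R :=
            (card_le_card (filter_subset_filter _ (subset_univ W))).trans
              (card_squares_meeting_le i (x, s))
          rw [Nat.succ_mul] at hcard
          omega)
      refine ⟨S, hS, fun f hf => ⟨(hS' f hf).1, fun y hy => ?_⟩⟩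
      obtain ⟨p, hp, hyp⟩ := (hS' f hf).2 y hy
      exact ⟨p, (mem_filter.1 hp).1, (mem_filter.1 hp).2, hyp⟩
    choose S hS hS' using step
    have hfix : ∀ s, ∀ f ∈ S s, ∀ y ∈ square i (x, s), f y = y := by
      intro s f hf y hy
      by_contra hne
      obtain ⟨p, _, hd, hyp⟩ := (hS' s f hf).2 y hne
      exact disjoint_left.1 hd hyp hy
    have hbase : ∀ s ∈ A, ∀ f ∈ S s, (squareCycle i (x, s) * f) x = x + i * s := by
      intro s hs f hf
      rw [Equiv.Perm.mul_apply, hfix s f hf x (by simp [mem_square]),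
        (squareCycle_corners hi h2 (hW _ (hmemA s hs))).1]
    refine ⟨(A.sigma S).image fun a => squareCycle i (x, a.1) * a.2, ?_, ?_⟩
    · rw [card_image_of_injOn, card_sigma]
      · calc q ^ (m + 1) = q * q ^ m := by ring
          _ ≤ #A * q ^ m := Nat.mul_le_mul_right _ hqA
          _ ≤ ∑ s ∈ A, #(S s) := by
            rw [← smul_eq_mul]
            exact card_nsmul_le_sum _ _ _ fun s _ => hS s
      · rintro ⟨s, f⟩ h ⟨s', f'⟩ h' heq
        simp only [coe_sigma, Set.mem_sigma_iff, mem_coe] at h h'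
        dsimp only at heq
        have hss : i * s = i * s' := by
          have := hbase s h.1 f h.2
          rw [heq, hbase s' h'.1 f' h'.2] at this
          exact (add_left_cancel this).symm
        obtain rfl : s = s' := by linear_combination (-i) * hss + (s - s') * hi
        rw [mul_left_cancel heq]
    · intro f hf
      obtain ⟨⟨s, g⟩, h, rfl⟩ := mem_image.1 hf
      obtain ⟨hs, hg⟩ := mem_sigma.1 h
      dsimp only at hs hg ⊢
      have hdisj : (squareCycle i (x, s)).Disjoint g := fun y => by
        by_cases hy : y ∈ square i (x, s)
        · exact Or.inr (hfix s g hg y hy)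
        · exact Or.inl (squareCycle_of_notMem hy)
      refine ⟨(isRotation_squareCycle hi h2 (hW _ (hmemA s hs))).mul (hS' s g hg).1 hdisj, ?_⟩
      intro y hy
      by_cases hgy : g y = y
      · refine ⟨(x, s), hmemA s hs, ?_⟩
        by_contra hn
        rw [Equiv.Perm.mul_apply, hgy] at hy
        exact hy (squareCycle_of_notMem hn)
      · obtain ⟨p, hp, _, hyp⟩ := (hS' s g hg).2 y hgy
        exact ⟨p, hp, hyp⟩

end Rotations

/-- The residue map `Fin n ≃ ZMod n`. -/
def finToZMod (n : ℕ) [NeZero n] : Fin n ≃ ZMod n where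
  toFun j := ((j : ℕ) : ZMod n)
  invFun z := ⟨z.val, ZMod.val_lt z⟩
  left_inv j := Fin.ext (ZMod.val_cast_of_lt j.2)
  right_inv z := ZMod.natCast_zmod_val z

/-- The placement `y ↦ i * f (f y)`, read on `Fin n`. -/
def placement (n : ℕ) [NeZero n] (i : ZMod n) (hi : i * i = -1) (f : Equiv.Perm (ZMod n)) :
    Equiv.Perm (Fin n) :=
  ((finToZMod n).trans ((f * f).trans
    ⟨fun z => i * z, fun z => -i * z, fun z => by linear_combination (-z) * hi,
      fun z => by linear_combination (-z) * hi⟩)).trans (finToZMod n).symm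

theorem cast_placement (n : ℕ) [NeZero n] (i : ZMod n) (hi : i * i = -1)
    (f : Equiv.Perm (ZMod n)) (j : Fin n) :
    (((placement n i hi f j : Fin n) : ℕ) : ZMod n) = i * f (f ((j : ℕ) : ZMod n)) :=
  (finToZMod n).apply_symm_apply _

theorem isQueens_placement (n : ℕ) [NeZero n] {i : ZMod n} (hi : i * i = -1)
    (h2 : IsUnit (2 : ZMod n)) {f : Equiv.Perm (ZMod n)} (hf : IsRotation i f) :
    IsQueens n (placement n i hi f) := by
  intro a b hab
  constructor
  · intro h
    have h' := congrArg (Int.cast : ℤ → ZMod n) h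
    push_cast at h'
    rw [cast_placement, cast_placement] at h'
    have ha := (hf ((a : ℕ) : ZMod n)).2
    have hb := (hf ((b : ℕ) : ZMod n)).2
    have key : f⁻¹ ((a : ℕ) : ZMod n) = f⁻¹ ((b : ℕ) : ZMod n) := h2.mul_left_cancel (by
      linear_combination (1 + i) * (hb - ha - h') +
        (f⁻¹ ((a : ℕ) : ZMod n) - f⁻¹ ((b : ℕ) : ZMod n)) * hi)
    exact hab ((finToZMod n).injective (f⁻¹.injective key))
  · intro h
    have h' := congrArg (Int.cast : ℤ → ZMod n) h
    push_cast at h'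
    rw [cast_placement, cast_placement] at h'
    have ha := (hf ((a : ℕ) : ZMod n)).1
    have hb := (hf ((b : ℕ) : ZMod n)).1
    have key : f ((a : ℕ) : ZMod n) = f ((b : ℕ) : ZMod n) := h2.mul_left_cancel (by
      linear_combination (1 - i) * (hb - ha + h') +
        (f ((a : ℕ) : ZMod n) - f ((b : ℕ) : ZMod n)) * hi)
    exact hab ((finToZMod n).injective (f.injective key))

/-- A rotation is recovered from its placement because `f (f y)` determines `f y`. -/
theorem placement_injOn (n : ℕ) [NeZero n] {i : ZMod n} (hi : i * i = -1)
    (h2 : IsUnit (2 : ZMod n)) {f g : Equiv.Perm (ZMod n)} (hf : IsRotation i f)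
    (hg : IsRotation i g) (h : placement n i hi f = placement n i hi g) : f = g := by
  refine Equiv.ext fun y => ?_
  obtain ⟨j, rfl⟩ := (finToZMod n).surjective y
  have h1 := cast_placement n i hi f j
  rw [h, cast_placement] at h1
  have ha := (hf ((j : ℕ) : ZMod n)).1
  have hb := (hg ((j : ℕ) : ZMod n)).1
  change f ((j : ℕ) : ZMod n) = g ((j : ℕ) : ZMod n)
  exact h2.mul_left_cancel (by
    linear_combination (1 - i) * (hb - ha - h1) +
      (f ((j : ℕ) : ZMod n) - g ((j : ℕ) : ZMod n)) * hi)

theorem pow_le_Q (n : ℕ) [NeZero n] {i : ZMod n} (hi : i * i = -1) (h2 : IsUnit (2 : ZMod n))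
    (q m : ℕ) (hqm : m * 16 + q ≤ n - 1) : q ^ m ≤ Q n := by
  obtain ⟨S, hS, hS'⟩ := exists_many_rotations hi h2 q m
    ((univ : Finset (ZMod n)) ×ˢ (univ.erase (0 : ZMod n)))
    (fun p hp => (mem_erase.1 (mem_product.1 hp).2).1) (by
      rw [card_product, card_erase_of_mem (mem_univ _), card_univ, ZMod.card]
      calc m * (16 * n) + q * n = n * (m * 16 + q) := by ring
        _ ≤ n * (n - 1) := Nat.mul_le_mul_left _ hqm)
  refine hS.trans ?_
  have hinj : Function.Injective
      (fun f : S => (⟨placement n i hi f, isQueens_placement n hi h2 (hS' f f.2).1⟩ :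
        {σ : Equiv.Perm (Fin n) // IsQueens n σ})) := fun f g h =>
    Subtype.ext (placement_injOn n hi h2 (hS' f f.2).1 (hS' g g.2).1 (congrArg Subtype.val h))
  have := Nat.card_le_card_of_injective _ hinj
  rwa [Nat.card_eq_fintype_card, Fintype.card_coe] at this

theorem queens_lower_bound :
    ∃ c : ℝ, 0 < c ∧ ∃ K : ℕ, ∀ k : ℕ, K ≤ k →
      ((2 ^ (2 * k) + 1 : ℝ)) ^ (c * (2 ^ (2 * k) + 1 : ℝ)) ≤
        (Q (2 ^ (2 * k) + 1) : ℝ) := by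
  refine ⟨1 / 128, by norm_num, 3, fun k hk => ?_⟩
  obtain ⟨t, rfl⟩ := Nat.exists_eq_add_of_le hk
  have hzero : (2 : ZMod (2 ^ (2 * (3 + t)) + 1)) ^ (2 * (3 + t)) + 1 = 0 := by
    have := ZMod.natCast_self (2 ^ (2 * (3 + t)) + 1)
    push_cast at this
    exact this
  have hi : (2 : ZMod (2 ^ (2 * (3 + t)) + 1)) ^ (3 + t) * 2 ^ (3 + t) = -1 := by
    rw [← pow_add, ← two_mul]
    exact eq_neg_of_add_eq_zero_left hzero
  have h2 : IsUnit (2 : ZMod (2 ^ (2 * (3 + t)) + 1)) := by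
    refine IsUnit.of_mul_eq_one (-2 ^ (2 * (3 + t) - 1)) ?_
    rw [mul_neg, ← pow_succ', Nat.sub_add_cancel (by omega), neg_eq_iff_eq_neg]
    exact eq_neg_of_add_eq_zero_left hzero
  have hpow : (2 : ℕ) ^ (2 * (3 + t)) = 64 * 2 ^ (2 * t) := by
    rw [mul_add, pow_add]; norm_num
  have hQ := pow_le_Q (2 ^ (2 * (3 + t)) + 1) hi h2 (2 ^ (2 * t + 5)) (2 ^ (2 * t + 1)) (by
    rw [Nat.add_sub_cancel, hpow, pow_add, pow_add]
    omega)
  have hQ' : ((2 : ℝ) ^ (2 * t + 5)) ^ (2 ^ (2 * t + 1) : ℕ) ≤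
      (Q (2 ^ (2 * (3 + t)) + 1) : ℝ) := by exact_mod_cast hQ
  refine le_trans ?_ hQ'
  -- With `n = 64 * 4 ^ t + 1`, the bounds `n ≤ 2 ^ (2 t + 7)` and `n / 128 ≤ 4 ^ t` suffice.
  have hP1 : (1 : ℝ) ≤ 2 ^ (2 * t) := one_le_pow₀ (by norm_num)
  have hn : (2 : ℝ) ^ (2 * (3 + t)) = 64 * 2 ^ (2 * t) := by exact_mod_cast hpow
  rw [hn]
  calc (64 * 2 ^ (2 * t) + 1 : ℝ) ^ (1 / 128 * (64 * 2 ^ (2 * t) + 1 : ℝ))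
      ≤ (64 * 2 ^ (2 * t) + 1 : ℝ) ^ (((2 ^ (2 * t) : ℕ) : ℝ)) := by
        apply Real.rpow_le_rpow_of_exponent_le
        · linarith
        · push_cast; linarith
    _ = (64 * 2 ^ (2 * t) + 1 : ℝ) ^ (2 ^ (2 * t) : ℕ) := Real.rpow_natCast _ _
    _ ≤ ((2 : ℝ) ^ (2 * t + 7)) ^ (2 ^ (2 * t) : ℕ) := by
        apply pow_le_pow_left₀ (by positivity)
        rw [pow_add]; linarith
    _ ≤ ((2 : ℝ) ^ (2 * t + 5)) ^ (2 ^ (2 * t + 1) : ℕ) := by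
        rw [← pow_mul, ← pow_mul]
        apply pow_le_pow_right₀ (by norm_num)
        rw [pow_succ]
        nlinarith [Nat.zero_le (2 ^ (2 * t)), Nat.zero_le (t * 2 ^ (2 * t))]
end

section
/- For every integer d ≥ 2 and every ε > 0, there exist δ > 0 and an integer K such that the following holds for every integer k ≥ K. Let V be a finite set of size n, and let E be a finite set of d-element subsets of V (a d-uniform hypergraph) such that every vertex of V is contained in exactly k edges of E, and for every two distinct vertices u, v ∈ V the number of edges containing both u and v is at most δ·k. Then the number of perfect matchings of (V, E), i.e., the number of subsets M ⊆ E consisting of pairwise disjoint edges whose union is all of V, is at most ((1 + ε) · k / e^(d−1))^(n/d). -/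
/-!
Fix an injective ranking of the vertices and build a matching greedily: take the vertex of largest
rank not yet covered and choose uniformly one of the edges at it that avoid everything covered so far.
The probability of building a given perfect matching `M` is the product of `1 / N_v(M)`, where `v` runs
over the vertices of top rank in their edge of `M` and `N_v(M)` is the number of edges available at `v`.
These probabilities add up to at most `1`, so `log y ≤ y - 1` shows that the logarithm of the number of
perfect matchings is at most the average over `M` of the sum of `log N_v(M)` (`card_log_card_le`).

Now average over rankings. Each vertex gets a uniform label in `{0, ..., m - 1}`, and ties are broken
arbitrarily. There are exactly `n / d` tops and `N_v ≤ k`, so `log N_v = log k + log (N_v / k)` with a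
nonpositive second term, which may be dropped unless `v` has strictly the largest label in its edge.
Given that `v` has label `j`, the latter happens with probability `(j / m) ^ (d - 1)`. An edge at `v`
which meets no edge of `M` twice is then available with probability at most
`p_j = ((j + 1) / m) ^ (d * (d - 1))`, since the `d - 1` further edges of `M` it meets must have all
labels at most `j`. The edges meeting some edge of `M` twice are a small proportion of all edges, by the
codegree condition. Bounding the logarithm by its tangent line at `p_j` makes everything linear, hence
computable by counting labellings (`sum_strictTops_le`), and the total is at most
`(n / d) log k + n d (d - 1) * (1 / m) ∑ (j / m) ^ (d - 1) log ((j + 1) / m)` plus an error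
`n d² δ m ^ (d (d - 1))`. The Riemann sum tends to `∫ x ^ (d - 1) log x = -1 / d²` over `[0, 1]`, which
produces the factor `exp (-(d - 1))` per edge. So `m` is chosen first, then `δ`.

In the lemmas the uniformity is written `d = s + 1`.
-/

/-! ### Greedy exposure of a perfect matching -/

/-- The perfect matchings of `U` by edges of `E`: families of pairwise disjoint edges with union
`U`. -/
def PM {V : Type} [DecidableEq V] (E : Finset (Finset V)) (U : Finset V) :
    Finset (Finset (Finset V)) :=
  E.powerset.filter (fun M => (∀ e ∈ M, ∀ f ∈ M, e ≠ f → Disjoint e f) ∧ M.sup id = U)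

/-- The union of the members of `M` containing `v`. If `M` is a matching covering `v`, this is the
unique edge of `M` through `v` (`cell_eq`); it is empty if `M` does not cover `v`. -/
def cell {V : Type} [DecidableEq V] (M : Finset (Finset V)) (v : V) : Finset V :=
  (M.filter (fun f => v ∈ f)).sup id

/-- The vertices covered by `M` that have the largest rank `r` in their edge of `M`. When vertices
are exposed in order of decreasing rank, these are the ones whose edge of `M` is not yet known. -/
def tops {V α : Type} [DecidableEq V] [LinearOrder α] (r : V → α)
    (M : Finset (Finset V)) : Finset V :=
  (M.sup id).filter (fun v => ∀ u ∈ cell M v, r u ≤ r v)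

/-- The edges of `E` at `v`, inside the vertex set covered by `M`, that are still possible when `v` is
exposed: no edge of `M` meeting them contains a vertex of rank larger than that of `v`. -/
def avail {V α : Type} [DecidableEq V] [LinearOrder α] (r : V → α)
    (E M : Finset (Finset V)) (v : V) : Finset (Finset V) :=
  E.filter (fun e => v ∈ e ∧ e ⊆ M.sup id ∧ ∀ w ∈ e, ∀ u ∈ cell M w, r u ≤ r v)

section
variable {V α : Type} [DecidableEq V] [LinearOrder α]

lemma mem_tops (r : V → α) (M : Finset (Finset V)) (v : V) :
    v ∈ tops r M ↔ v ∈ M.sup id ∧ ∀ u ∈ cell M v, r u ≤ r v := by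
  simp only [tops, Finset.mem_filter]

lemma mem_avail (r : V → α) (E M : Finset (Finset V)) (v : V) (e : Finset V) :
    e ∈ avail r E M v ↔ e ∈ E ∧ v ∈ e ∧ e ⊆ M.sup id ∧ ∀ w ∈ e, ∀ u ∈ cell M w, r u ≤ r v := by
  simp only [avail, Finset.mem_filter]

lemma mem_cell (M : Finset (Finset V)) (u v : V) :
    u ∈ cell M v ↔ ∃ f ∈ M, v ∈ f ∧ u ∈ f := by
  simp [cell, Finset.mem_sup, and_assoc]

lemma mem_PM (E M : Finset (Finset V)) (U : Finset V) : M ∈ PM E U ↔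
    M ⊆ E ∧ (∀ e ∈ M, ∀ f ∈ M, e ≠ f → Disjoint e f) ∧ M.sup id = U := by
  simp [PM]

lemma mem_union_iff (M : Finset (Finset V)) (v : V) : v ∈ M.sup id ↔ ∃ f ∈ M, v ∈ f := by
  simp [Finset.mem_sup]

lemma edge_unique {M : Finset (Finset V)} (hd : ∀ e ∈ M, ∀ f ∈ M, e ≠ f → Disjoint e f)
    {e f : Finset V} {v : V} (he : e ∈ M) (hf : f ∈ M) (hve : v ∈ e) (hvf : v ∈ f) : e = f := by
  by_contra h
  exact Finset.disjoint_left.1 (hd e he f hf h) hve hvf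

lemma cell_eq {M : Finset (Finset V)} (hd : ∀ e ∈ M, ∀ f ∈ M, e ≠ f → Disjoint e f)
    {g : Finset V} {v : V} (hg : g ∈ M) (hv : v ∈ g) : cell M v = g := by
  ext u
  rw [mem_cell]
  constructor
  · rintro ⟨f, hf, hvf, huf⟩
    rwa [edge_unique hd hg hf hv hvf]
  · exact fun hu => ⟨g, hg, hv, hu⟩

lemma PM_erase {E M : Finset (Finset V)} {U g : Finset V} (hM : M ∈ PM E U) (hg : g ∈ M) :
    M.erase g ∈ PM E (U \ g) := by
  rw [mem_PM] at hM ⊢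
  obtain ⟨h1, h2, h3⟩ := hM
  refine ⟨(Finset.erase_subset _ _).trans h1, fun e he f hf => h2 e (Finset.mem_of_mem_erase he) f
    (Finset.mem_of_mem_erase hf), ?_⟩
  ext v
  rw [Finset.mem_sdiff, ← h3, mem_union_iff, mem_union_iff]
  constructor
  · rintro ⟨f, hf, hvf⟩
    rw [Finset.mem_erase] at hf
    refine ⟨⟨f, hf.2, hvf⟩, fun hvg => hf.1 (edge_unique h2 hf.2 hg hvf hvg)⟩
  · rintro ⟨⟨f, hf, hvf⟩, hvg⟩
    exact ⟨f, Finset.mem_erase.2 ⟨fun h => hvg (h ▸ hvf), hf⟩, hvf⟩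

lemma PM_insert {E M : Finset (Finset V)} {U g : Finset V} (hgE : g ∈ E) (hgU : g ⊆ U)
    (hM : M ∈ PM E (U \ g)) : insert g M ∈ PM E U := by
  rw [mem_PM] at hM ⊢
  obtain ⟨h1, h2, h3⟩ := hM
  have hdis : ∀ f ∈ M, Disjoint f g := fun f hf => by
    have : f ⊆ U \ g := h3 ▸ Finset.le_sup (f := id) hf
    exact Finset.disjoint_of_subset_left this Finset.sdiff_disjoint
  refine ⟨Finset.insert_subset hgE h1, ?_, ?_⟩
  · intro e he f hf hef
    rw [Finset.mem_insert] at he hf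
    rcases he with rfl | he <;> rcases hf with rfl | hf
    · exact absurd rfl hef
    · exact (hdis f hf).symm
    · exact hdis e he
    · exact h2 e he f hf hef
  · rw [Finset.sup_insert, h3]
    simpa using hgU

lemma cell_erase {M : Finset (Finset V)} {g : Finset V}
    {w : V} (hw : w ∉ g) : cell (M.erase g) w = cell M w := by
  ext u
  simp only [mem_cell, Finset.mem_erase]
  constructor
  · rintro ⟨f, hf, h⟩
    exact ⟨f, hf.2, h⟩
  · rintro ⟨f, hf, h⟩
    exact ⟨f, ⟨fun h' => hw (h' ▸ h.1), hf⟩, h⟩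

/-- If `v` has the largest rank in `U` and `g` is the edge of `M` at `v`, then every edge at `v` inside
`U` is available at `v`, and deleting `g` from `M` changes neither the other tops nor the edges
available at them. -/
lemma prod_step (r : V → α) (hr : Function.Injective r) {E M : Finset (Finset V)} {U g : Finset V}
    (hM : M ∈ PM E U) (hg : g ∈ M) {v : V} (hv : v ∈ g) (hmax : ∀ u ∈ U, r u ≤ r v) :
    ∏ x ∈ tops r M, (1 / ((avail r E M x).card : ℝ)) =
      (1 / ((E.filter (fun e => v ∈ e ∧ e ⊆ U)).card : ℝ)) *
        ∏ x ∈ tops r (M.erase g), (1 / ((avail r E (M.erase g) x).card : ℝ)) := by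
  have hM' := hM
  have hMe := PM_erase hM hg
  rw [mem_PM] at hM' hMe
  obtain ⟨h1, h2, h3⟩ := hM'
  obtain ⟨-, h2', h3'⟩ := hMe
  have hcU : ∀ w u, u ∈ cell M w → u ∈ U := by
    intro w u hu
    rw [mem_cell] at hu
    obtain ⟨f, hf, _, huf⟩ := hu
    rw [← h3, mem_union_iff]; exact ⟨f, hf, huf⟩
  have hgU : g ⊆ U := h3 ▸ Finset.le_sup (f := id) hg
  have htop : tops r M = insert v (tops r (M.erase g)) := by
    ext x
    simp only [tops, Finset.mem_insert, Finset.mem_filter, h3, h3', Finset.mem_sdiff]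
    by_cases hx : x ∈ g
    · rw [cell_eq h2 hg hx]
      constructor
      · rintro ⟨hxU, h⟩
        exact Or.inl (hr (le_antisymm (hmax x hxU) (h v hv)))
      · rintro (rfl | h)
        · exact ⟨hgU hx, fun u hu => hmax u (hgU hu)⟩
        · exact absurd hx h.1.2
    · rw [cell_erase hx]
      have : x ≠ v := fun h => hx (h ▸ hv)
      simp [hx, this]
  have hvn : v ∉ tops r (M.erase g) := by
    simp [tops, h3', hv]
  rw [htop, Finset.prod_insert hvn]
  congr 1
  · have : avail r E M v = E.filter (fun e => v ∈ e ∧ e ⊆ U) := by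
      unfold avail
      apply Finset.filter_congr
      intro e he
      rw [h3]
      constructor
      · rintro ⟨a, b, c⟩; exact ⟨a, b⟩
      · rintro ⟨a, b⟩; exact ⟨a, b, fun w _ u hu => hmax u (hcU w u hu)⟩
    rw [this]
  · apply Finset.prod_congr rfl
    intro x hx
    have hx' : x ∈ U ∧ x ∉ g := by
      simp only [tops, Finset.mem_filter, h3', Finset.mem_sdiff] at hx
      exact hx.1
    have hlt : r x < r v := lt_of_le_of_ne (hmax x hx'.1) (fun h => hx'.2 (hr h ▸ hv))
    have : avail r E M x = avail r E (M.erase g) x := by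
      unfold avail
      apply Finset.filter_congr
      intro e he
      rw [h3, h3']
      constructor
      · rintro ⟨a, b, c⟩
        have hdis : ∀ w ∈ e, w ∉ g := fun w hw hwg =>
          absurd (c w hw v (by rw [cell_eq h2 hg hwg]; exact hv)) (not_le.2 hlt)
        refine ⟨a, fun w hw => Finset.mem_sdiff.2 ⟨b hw, hdis w hw⟩, fun w hw u hu => c w hw u ?_⟩
        rwa [cell_erase (hdis w hw)] at hu
      · rintro ⟨a, b, c⟩
        refine ⟨a, b.trans Finset.sdiff_subset, fun w hw u hu => c w hw u ?_⟩
        rwa [cell_erase (Finset.mem_sdiff.1 (b hw)).2]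
    rw [this]

/-- Expose the vertices of `U` in order of decreasing rank and give each uncovered one a uniformly
random available edge. The product below is the probability of producing `M`, so these numbers add
up to at most `1`. -/
lemma sum_weights_le_one (r : V → α) (hr : Function.Injective r) (E : Finset (Finset V))
    (hE : ∀ e ∈ E, e.Nonempty) :
    ∀ (N : ℕ) (U : Finset V), U.card = N →
      ∑ M ∈ PM E U, ∏ x ∈ tops r M, (1 / ((avail r E M x).card : ℝ)) ≤ 1 := by
  intro N
  induction N using Nat.strong_induction_on with
  | _ N ih =>
  intro U hU
  rcases U.eq_empty_or_nonempty with rfl | hne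
  · have h0 : PM E (∅ : Finset V) ⊆ {∅} := by
      intro M hM
      obtain ⟨h1, -, h3⟩ := (mem_PM _ _ _).1 hM
      rw [Finset.mem_singleton, Finset.eq_empty_iff_forall_notMem]
      intro f hf
      obtain ⟨x, hx⟩ := hE f (h1 hf)
      have := (mem_union_iff M x).2 ⟨f, hf, hx⟩
      rw [h3] at this
      exact absurd this (Finset.notMem_empty x)
    refine (Finset.sum_le_sum_of_subset_of_nonneg h0 fun M _ _ =>
      Finset.prod_nonneg fun x _ => by positivity).trans ?_
    simp [tops]
  obtain ⟨v, hvU, hmax⟩ := Finset.exists_max_image U r hne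
  set D := E.filter (fun e => v ∈ e ∧ e ⊆ U) with hD
  have hstep : ∀ M ∈ PM E U, ∏ x ∈ tops r M, (1 / ((avail r E M x).card : ℝ)) =
      ∑ g ∈ D, if g ∈ M then ∏ x ∈ tops r M, (1 / ((avail r E M x).card : ℝ)) else 0 := by
    intro M hM
    have hM' := (mem_PM _ _ _).1 hM
    obtain ⟨g, hg, hvg⟩ := (mem_union_iff M v).1 (hM'.2.2 ▸ hvU)
    have hgD : g ∈ D := by
      rw [hD, Finset.mem_filter]
      exact ⟨hM'.1 hg, hvg, hM'.2.2 ▸ Finset.le_sup (f := id) hg⟩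
    rw [Finset.sum_eq_single_of_mem g hgD, if_pos hg]
    intro f hf hfg
    rw [if_neg]
    intro hfM
    exact hfg (edge_unique hM'.2.1 hfM hg (Finset.mem_filter.1 hf).2.1 hvg)
  rw [Finset.sum_congr rfl hstep, Finset.sum_comm]
  have hg : ∀ g ∈ D, (∑ M ∈ PM E U, if g ∈ M then
      ∏ x ∈ tops r M, (1 / ((avail r E M x).card : ℝ)) else 0) ≤ 1 / (D.card : ℝ) := by
    intro g hg
    obtain ⟨hgE, hvg, hgU⟩ := Finset.mem_filter.1 hg
    have hcard : (U \ g).card < N := by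
      rw [← hU]
      exact Finset.card_lt_card (Finset.sdiff_ssubset hgU ⟨v, hvg⟩)
    have h1 : (∑ M ∈ PM E U, if g ∈ M then
        ∏ x ∈ tops r M, (1 / ((avail r E M x).card : ℝ)) else 0) =
        ∑ M ∈ PM E (U \ g), (1 / (D.card : ℝ)) *
          ∏ x ∈ tops r M, (1 / ((avail r E M x).card : ℝ)) := by
      rw [← Finset.sum_filter]
      refine Finset.sum_nbij' (fun M => M.erase g) (fun M => insert g M) ?_ ?_ ?_ ?_ ?_
      · intro M hM
        rw [Finset.mem_filter] at hM
        exact PM_erase hM.1 hM.2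
      · intro M hM
        rw [Finset.mem_filter]
        exact ⟨PM_insert hgE hgU hM, Finset.mem_insert_self _ _⟩
      · intro M hM
        exact Finset.insert_erase (Finset.mem_filter.1 hM).2
      · intro M hM
        apply Finset.erase_insert
        intro hgM
        have := (mem_union_iff M v).2 ⟨g, hgM, hvg⟩
        rw [((mem_PM _ _ _).1 hM).2.2, Finset.mem_sdiff] at this
        exact this.2 hvg
      · intro M hM
        rw [Finset.mem_filter] at hM
        exact prod_step r hr hM.1 hM.2 hvg hmax
    rw [h1, ← Finset.mul_sum]
    calc _ ≤ 1 / (D.card : ℝ) * 1 := by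
          apply mul_le_mul_of_nonneg_left (ih _ hcard _ rfl) (by positivity)
      _ = _ := mul_one _
  refine (Finset.sum_le_sum hg).trans ?_
  rw [Finset.sum_const, nsmul_eq_mul, mul_one_div]
  exact div_self_le_one _

/-- The logarithm of the number of matchings is at most the average over all matchings of the sum of
`log (number of available edges)`; an elementary form of the chain rule for entropy. -/
lemma card_log_card_le (r : V → α) (hr : Function.Injective r) (E : Finset (Finset V))
    (hE : ∀ e ∈ E, e.Nonempty) (U : Finset V) :
    ((PM E U).card : ℝ) * Real.log (PM E U).card ≤
      ∑ M ∈ PM E U, ∑ x ∈ tops r M, Real.log (avail r E M x).card := by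
  set T : ℝ := ((PM E U).card : ℝ) with hT
  rcases (PM E U).eq_empty_or_nonempty with h0 | hne
  · simp [hT, h0]
  have hT0 : 0 < T := by rw [hT]; exact_mod_cast hne.card_pos
  have hpos : ∀ M ∈ PM E U, ∀ x ∈ tops r M, (0 : ℝ) < ((avail r E M x).card : ℝ) := by
    intro M hM x hx
    obtain ⟨h1, h2, h3⟩ := (mem_PM _ _ _).1 hM
    obtain ⟨hxU, hx2⟩ := Finset.mem_filter.1 hx
    obtain ⟨g, hg, hxg⟩ := (mem_union_iff M x).1 hxU
    have : g ∈ avail r E M x := by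
      refine Finset.mem_filter.2 ⟨h1 hg, hxg, Finset.le_sup (f := id) hg, fun w hw u hu => hx2 u ?_⟩
      rw [cell_eq h2 hg hw] at hu
      rwa [cell_eq h2 hg hxg]
    exact_mod_cast Finset.card_pos.2 ⟨g, this⟩
  -- `log y ≤ y - 1` at `y = T * weight of M`; the right-hand sides add up to at most `0`
  have key : ∀ M ∈ PM E U, Real.log T - ∑ x ∈ tops r M, Real.log (avail r E M x).card ≤
      T * ∏ x ∈ tops r M, (1 / ((avail r E M x).card : ℝ)) - 1 := by
    intro M hM
    have hp : 0 < ∏ x ∈ tops r M, (1 / ((avail r E M x).card : ℝ)) :=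
      Finset.prod_pos fun x hx => one_div_pos.2 (hpos M hM x hx)
    refine le_trans (le_of_eq ?_) (Real.log_le_sub_one_of_pos (mul_pos hT0 hp))
    rw [Real.log_mul hT0.ne' hp.ne', Real.log_prod (fun x hx => (one_div_pos.2 (hpos M hM x hx)).ne')]
    simp [sub_eq_add_neg]
  have hs := Finset.sum_le_sum key
  rw [Finset.sum_sub_distrib, Finset.sum_sub_distrib, ← Finset.mul_sum] at hs
  simp only [Finset.sum_const, nsmul_eq_mul, mul_one] at hs
  have := mul_le_mul_of_nonneg_left (sum_weights_le_one r hr E hE _ U rfl) hT0.le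
  rw [← hT] at hs
  linarith
end

/-! ### Counting labellings -/

section
variable {V : Type} [Fintype V] [DecidableEq V]

/-- With `n` vertices and `m` labels, the number of labellings giving `v` the label `j`, the rest of
`g` labels below `j` and `W` labels at most `j` (labels start at `0`). -/
lemma card_labellings {m : ℕ} (v : V) (g W : Finset V) (hv : v ∈ g) (hgW : Disjoint g W)
    (j : Fin m) :
    ((Finset.univ.filter (fun l : V → Fin m => l v = j ∧ (∀ u ∈ g, u ≠ v → l u < j) ∧
      ∀ u ∈ W, l u ≤ j)).card : ℝ) =
    (m : ℝ) ^ Fintype.card V * ((1 / m : ℝ) * ((j : ℝ) / m) ^ (g.card - 1) *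
      (((j : ℝ) + 1) / m) ^ W.card) := by
  have hm : (m : ℝ) ≠ 0 := by
    have := j.pos
    positivity
  have h1 : Finset.univ.filter (fun l : V → Fin m => l v = j ∧ (∀ u ∈ g, u ≠ v → l u < j) ∧
      ∀ u ∈ W, l u ≤ j) = Fintype.piFinset (fun u => if u = v then {j} else
        if u ∈ g then Finset.Iio j else if u ∈ W then Finset.Iic j else Finset.univ) := by
    ext l
    simp only [Finset.mem_filter, Finset.mem_univ, true_and, Fintype.mem_piFinset]
    constructor
    · rintro ⟨a, b, c⟩ u
      split_ifs with h1 h2 h3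
      · simp [h1, a]
      · simpa using b u h2 h1
      · simpa using c u h3
      · simp
    · intro h
      refine ⟨by simpa using h v, fun u hu huv => ?_, fun u hu => ?_⟩
      · simpa [huv, hu] using h u
      · have hg : u ∉ g := fun hg => Finset.disjoint_left.1 hgW hg hu
        have huv : u ≠ v := fun huv => hg (huv ▸ hv)
        simpa [huv, hu, hg] using h u
  have h2 : ∀ u : V, (((if u = v then {j} else
        if u ∈ g then Finset.Iio j else if u ∈ W then Finset.Iic j else Finset.univ :
          Finset (Fin m)).card : ℕ) : ℝ) = m * ((if u = v then (1 / m : ℝ) else 1) *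
          (if u ∈ g.erase v then ((j : ℝ) / m) else 1) *
          (if u ∈ W then (((j : ℝ) + 1) / m) else 1)) := by
    intro u
    have hW : u ∈ g → u ∉ W := fun h => Finset.disjoint_left.1 hgW h
    have hW' : v ∉ W := Finset.disjoint_left.1 hgW hv
    by_cases huv : u = v
    · subst huv
      simp [hW']
      field_simp
    · by_cases hug : u ∈ g
      · simp [huv, hug, hW hug]
        field_simp
      · by_cases huW : u ∈ W
        · simp [huv, hug, huW]
          field_simp
        · simp [huv, hug, huW]
  rw [h1, Fintype.card_piFinset, Nat.cast_prod, Finset.prod_congr rfl (fun u _ => h2 u),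
    Finset.prod_mul_distrib, Finset.prod_mul_distrib, Finset.prod_mul_distrib]
  congr 1
  · simp [Finset.card_univ]
  · rw [Finset.prod_ite_eq' Finset.univ v, if_pos (Finset.mem_univ v), Finset.prod_ite_mem,
      Finset.prod_ite_mem]
    simp [Finset.card_erase_of_mem hv, div_pow]

/-- The vertices whose label is strictly larger than all other labels in their cell, where `c v` is
the cell (matching edge) of `v`. -/
def strictTops {m : ℕ} (c : V → Finset V) (l : V → Fin m) : Finset V :=
  Finset.univ.filter (fun v => ∀ u ∈ c v, u ≠ v → l u < l v)

/-- The edges at `v` all of whose vertices lie in cells with labels at most `l v`. Compared with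
`avail`, ties of labels count in favour of availability. -/
def availL {m : ℕ} (c : V → Finset V) (E : Finset (Finset V)) (l : V → Fin m) (v : V) :
    Finset (Finset V) :=
  E.filter (fun e => v ∈ e ∧ ∀ w ∈ e, ∀ u ∈ c w, l u ≤ l v)

/-- `e` is bad if it contains two distinct vertices of the same cell. Every cell of at least two
vertices is itself bad. -/
def Bad (c : V → Finset V) (e : Finset V) : Prop := ∃ u ∈ e, ∃ w ∈ e, u ≠ w ∧ w ∈ c u

instance (c : V → Finset V) : DecidablePred (Bad c) := fun e => by
  unfold Bad; infer_instance

/-- Sum of the number of available edges over the labellings in which `v` is a strict top of its cell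
with label `j`. A good edge at `v` meets `s` further cells, with `s * (s + 1)` vertices, each of which
must have label at most `j`; for a bad edge the trivial bound is used. -/
lemma sum_availL_le {m s : ℕ} (c : V → Finset V) (hc1 : ∀ v, v ∈ c v)
    (hc2 : ∀ u v, u ∈ c v → c u = c v) (hc3 : ∀ v, (c v).card = s + 1)
    (E : Finset (Finset V)) (hE : ∀ e ∈ E, e.card = s + 1) (v : V) (j : Fin m) :
    ∑ l : V → Fin m with (l v = j ∧ ∀ u ∈ c v, u ≠ v → l u < j), ((availL c E l v).card : ℝ) ≤
      (m : ℝ) ^ Fintype.card V * ((1 / m : ℝ) * ((j : ℝ) / m) ^ s) *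
        ∑ e ∈ E with v ∈ e, ((((j : ℝ) + 1) / m) ^ (s * (s + 1)) + if Bad c e then 1 else 0) := by
  have hcd : ∀ u w x, x ∈ c u → x ∈ c w → c u = c w := fun u w x h1 h2 => by
    rw [← hc2 x u h1, hc2 x w h2]
  have h1 : ∀ l ∈ Finset.univ.filter (fun l : V → Fin m => l v = j ∧ ∀ u ∈ c v, u ≠ v → l u < j),
      ((availL c E l v).card : ℝ) = ∑ e ∈ E with v ∈ e,
        if (∀ w ∈ e, ∀ u ∈ c w, l u ≤ j) then (1 : ℝ) else 0 := by
    intro l hl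
    have hl' := (Finset.mem_filter.1 hl).2.1
    rw [Finset.sum_boole, Finset.filter_filter, availL, hl']
  rw [Finset.sum_congr rfl h1, Finset.sum_comm, Finset.mul_sum]
  apply Finset.sum_le_sum
  intro e he
  obtain ⟨heE, hve⟩ := Finset.mem_filter.1 he
  rw [Finset.sum_boole, Finset.filter_filter]
  by_cases hb : Bad c e
  · have hc := card_labellings v (c v) ∅ (hc1 v) (Finset.disjoint_empty_right _) j
    simp only [hc3, Nat.add_sub_cancel, Finset.card_empty, pow_zero, mul_one] at hc
    rw [if_pos hb]
    calc _ ≤ _ := by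
          refine Nat.cast_le.2 (Finset.card_le_card (t := Finset.univ.filter
            (fun l : V → Fin m => l v = j ∧ (∀ u ∈ c v, u ≠ v → l u < j) ∧
              ∀ u ∈ (∅ : Finset V), l u ≤ j)) ?_)
          intro l hl
          simp only [Finset.mem_filter, Finset.mem_univ, true_and] at hl ⊢
          exact ⟨hl.1.1, hl.1.2, by simp⟩
      _ = _ := hc
      _ ≤ _ := le_mul_of_one_le_right (by positivity) (le_add_of_nonneg_left (by positivity))
  · rw [if_neg hb, add_zero]
    have hb' : ∀ u ∈ e, ∀ w ∈ e, u ≠ w → w ∉ c u := fun u hu w hw huw h => hb ⟨u, hu, w, hw, huw, h⟩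
    set W := (e.erase v).biUnion c with hW
    have hdis : ∀ u ∈ e, ∀ w ∈ e, u ≠ w → Disjoint (c u) (c w) := by
      intro u hu w hw huw
      rw [Finset.disjoint_left]
      intro x hxu hxw
      exact hb' u hu w hw huw (hcd u w x hxu hxw ▸ hc1 w)
    have hWc : W.card = s * (s + 1) := by
      rw [hW, Finset.card_biUnion, Finset.sum_congr rfl (fun u _ => hc3 u), Finset.sum_const,
        Finset.card_erase_of_mem hve, hE e heE]
      · simp
      · intro u hu w hw huw
        exact hdis u (Finset.mem_of_mem_erase hu) w (Finset.mem_of_mem_erase hw) huw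
    have hgW : Disjoint (c v) W := by
      rw [hW, Finset.disjoint_biUnion_right]
      intro w hw
      exact hdis v hve w (Finset.mem_of_mem_erase hw) (Finset.ne_of_mem_erase hw).symm
    have hc := card_labellings v (c v) W (hc1 v) hgW j
    rw [hc3, Nat.add_sub_cancel, hWc] at hc
    rw [mul_assoc ((m : ℝ) ^ Fintype.card V), ← hc]
    refine Nat.cast_le.2 (Finset.card_le_card ?_)
    intro l hl
    simp only [Finset.mem_filter, Finset.mem_univ, true_and] at hl ⊢
    refine ⟨hl.1.1, hl.1.2, fun u hu => ?_⟩
    obtain ⟨w, hw, huw⟩ := Finset.mem_biUnion.1 hu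
    exact hl.2 w (Finset.mem_of_mem_erase hw) u huw

/-- There are few bad edges: each is counted by a codegree of two vertices of a common cell. -/
lemma sum_bad_le {s k : ℕ} (δ : ℝ) (hδ : 0 ≤ δ) (c : V → Finset V)
    (hc3 : ∀ v, (c v).card = s + 1)
    (E : Finset (Finset V)) (hE : ∀ e ∈ E, e.card = s + 1)
    (hco : ∀ u v : V, u ≠ v → ((E.filter (fun e => u ∈ e ∧ v ∈ e)).card : ℝ) ≤ δ * k) :
    ∑ v : V, ∑ e ∈ E with v ∈ e, (if Bad c e then (1 : ℝ) else 0) ≤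
      ((s : ℝ) + 1) ^ 2 * Fintype.card V * (δ * k) := by
  have h1 : ∑ v : V, ∑ e ∈ E with v ∈ e, (if Bad c e then (1 : ℝ) else 0) =
      ∑ e ∈ E, ((s : ℝ) + 1) * (if Bad c e then (1 : ℝ) else 0) := by
    simp_rw [Finset.sum_filter]
    rw [Finset.sum_comm]
    apply Finset.sum_congr rfl
    intro e he
    rw [Finset.sum_ite_mem, Finset.univ_inter, Finset.sum_const, hE e he, nsmul_eq_mul]
    push_cast; rfl
  have h2 : ∑ e ∈ E, (if Bad c e then (1 : ℝ) else 0) ≤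
      ∑ e ∈ E, ∑ u : V, ∑ w ∈ (c u).erase u, if u ∈ e ∧ w ∈ e then (1 : ℝ) else 0 := by
    apply Finset.sum_le_sum
    intro e he
    have hnn : ∀ u w : V, (0 : ℝ) ≤ if u ∈ e ∧ w ∈ e then (1 : ℝ) else 0 := fun u w => by
      split_ifs <;> norm_num
    split_ifs with hb
    · obtain ⟨u, hu, w, hw, huw, hwc⟩ := hb
      calc (1 : ℝ) = if u ∈ e ∧ w ∈ e then (1 : ℝ) else 0 := by rw [if_pos ⟨hu, hw⟩]
        _ ≤ ∑ w ∈ (c u).erase u, if u ∈ e ∧ w ∈ e then (1 : ℝ) else 0 :=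
          Finset.single_le_sum (f := fun w => if u ∈ e ∧ w ∈ e then (1 : ℝ) else 0)
            (fun w _ => hnn u w) (Finset.mem_erase.2 ⟨huw.symm, hwc⟩)
        _ ≤ _ := Finset.single_le_sum
            (f := fun u => ∑ w ∈ (c u).erase u, if u ∈ e ∧ w ∈ e then (1 : ℝ) else 0)
            (fun u _ => Finset.sum_nonneg fun w _ => hnn u w) (Finset.mem_univ u)
    · exact Finset.sum_nonneg fun u _ => Finset.sum_nonneg fun w _ => hnn u w
  have h3 : ∑ e ∈ E, ∑ u : V, ∑ w ∈ (c u).erase u, (if u ∈ e ∧ w ∈ e then (1 : ℝ) else 0) ≤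
      ∑ u : V, ∑ w ∈ c u, δ * k := by
    rw [Finset.sum_comm]
    apply Finset.sum_le_sum
    intro u _
    rw [Finset.sum_comm]
    calc _ ≤ ∑ w ∈ (c u).erase u, δ * k := by
          apply Finset.sum_le_sum
          intro w hw
          rw [Finset.sum_boole]
          exact hco u w (Finset.ne_of_mem_erase hw).symm
      _ ≤ _ := Finset.sum_le_sum_of_subset_of_nonneg (Finset.erase_subset _ _)
          (fun _ _ _ => by positivity)
  rw [h1, ← Finset.mul_sum]
  calc _ ≤ ((s : ℝ) + 1) * ∑ u : V, ∑ w ∈ c u, δ * k :=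
        mul_le_mul_of_nonneg_left (h2.trans h3) (by positivity)
    _ = _ := by
      simp only [Finset.sum_const, hc3, nsmul_eq_mul, Finset.card_univ]
      push_cast; ring

/-- Sum over all labellings of the tangent-line bounds for `log (available / k)` at strict tops. The
tangent to the logarithm is taken at `((j + 1) / m) ^ (s * (s + 1))`, the probability that a good edge
is available. -/
lemma sum_strictTops_le {m s k : ℕ} (hs : 1 ≤ s) (hk : 0 < k) (δ : ℝ) (hδ : 0 ≤ δ) (hm : 0 < m)
    (c : V → Finset V) (hc1 : ∀ v, v ∈ c v)
    (hc2 : ∀ u v, u ∈ c v → c u = c v) (hc3 : ∀ v, (c v).card = s + 1)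
    (E : Finset (Finset V)) (hE : ∀ e ∈ E, e.card = s + 1)
    (hdeg : ∀ v : V, (E.filter (fun e => v ∈ e)).card = k)
    (hco : ∀ u v : V, u ≠ v → ((E.filter (fun e => u ∈ e ∧ v ∈ e)).card : ℝ) ≤ δ * k) :
    ∑ l : V → Fin m, ∑ v ∈ strictTops c l,
      (((availL c E l v).card : ℝ) / (k * (((l v : ℝ) + 1) / m) ^ (s * (s + 1))) - 1
        + Real.log ((((l v : ℝ) + 1) / m) ^ (s * (s + 1)))) ≤
    (m : ℝ) ^ Fintype.card V * (Fintype.card V * ((s : ℝ) * (s + 1) *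
      ∑ j ∈ Finset.range m, (1 / m : ℝ) * (((j : ℝ) / m) ^ s * Real.log (((j : ℝ) + 1) / m)) +
      ((s : ℝ) + 1) ^ 2 * δ * (m : ℝ) ^ (s * (s + 1)))) := by
  have hm1 : (1 : ℝ) ≤ m := by exact_mod_cast hm
  have hm' : (0 : ℝ) < m := by linarith
  have hk' : (0 : ℝ) < k := by exact_mod_cast hk
  set p : Fin m → ℝ := fun j => (((j : ℝ) + 1) / m) ^ (s * (s + 1)) with hp
  set q : Fin m → ℝ := fun j => (1 / m : ℝ) * ((j : ℝ) / m) ^ s with hq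
  set n : ℝ := (Fintype.card V : ℝ) with hn
  have hp0 : ∀ j, 0 < p j := fun j => by simp only [hp]; positivity
  have hq0 : ∀ j, 0 ≤ q j := fun j => by simp only [hq]; positivity
  set A : V → Fin m → Finset (V → Fin m) := fun v j =>
    Finset.univ.filter (fun l : V → Fin m => l v = j ∧ ∀ u ∈ c v, u ≠ v → l u < j) with hA
  have hAc : ∀ v j, ((A v j).card : ℝ) = (m : ℝ) ^ Fintype.card V * q j := by
    intro v j
    have h := card_labellings v (c v) ∅ (hc1 v) (Finset.disjoint_empty_right _) j
    simpa [hc3, hA, hq] using h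
  -- group the labellings by the value at `v`
  have h1 : ∑ l : V → Fin m, ∑ v ∈ strictTops c l,
      (((availL c E l v).card : ℝ) / (k * p (l v)) - 1 + Real.log (p (l v))) =
      ∑ v : V, ∑ j : Fin m, ∑ l ∈ A v j,
        (((availL c E l v).card : ℝ) / (k * p j) - 1 + Real.log (p j)) := by
    simp_rw [strictTops, hA, Finset.sum_filter]
    rw [Finset.sum_comm]
    apply Finset.sum_congr rfl
    intro v _
    rw [Finset.sum_comm]
    apply Finset.sum_congr rfl
    intro l _
    rw [Finset.sum_eq_single_of_mem (l v) (Finset.mem_univ _)]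
    · simp
    · intro j _ hj
      rw [if_neg]
      rintro ⟨h, -⟩
      exact hj h.symm
  have h2 : ∀ v j, ∑ l ∈ A v j,
        (((availL c E l v).card : ℝ) / (k * p j) - 1 + Real.log (p j)) ≤
      (m : ℝ) ^ Fintype.card V * q j *
        ((∑ e ∈ E with v ∈ e, if Bad c e then (1 : ℝ) else 0) / (k * p j) + Real.log (p j)) := by
    intro v j
    have h := sum_availL_le c hc1 hc2 hc3 E hE v j
    rw [Finset.sum_add_distrib, Finset.sum_const, hdeg, nsmul_eq_mul] at h
    rw [Finset.sum_add_distrib, Finset.sum_sub_distrib, ← Finset.sum_div]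
    simp only [Finset.sum_const, nsmul_eq_mul, mul_one, hAc]
    have h' := div_le_div_of_nonneg_right h (mul_pos hk' (hp0 j)).le
    have e : (m : ℝ) ^ Fintype.card V * q j * (k * p j +
        ∑ e ∈ E with v ∈ e, if Bad c e then (1 : ℝ) else 0) / (k * p j) =
        (m : ℝ) ^ Fintype.card V * q j + (m : ℝ) ^ Fintype.card V * q j *
          ((∑ e ∈ E with v ∈ e, if Bad c e then (1 : ℝ) else 0) / (k * p j)) := by
      have := (hp0 j).ne'
      field_simp
    have h'' := h'.trans_eq e
    rw [mul_add]
    linarith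
  have hB := sum_bad_le δ hδ c hc3 E hE hco
  have h3 : ∀ j, ∑ v : V, (m : ℝ) ^ Fintype.card V * q j *
        ((∑ e ∈ E with v ∈ e, if Bad c e then (1 : ℝ) else 0) / (k * p j) + Real.log (p j)) ≤
      (m : ℝ) ^ Fintype.card V * (n * (q j * Real.log (p j) +
        1 / m * (((s : ℝ) + 1) ^ 2 * δ * (m : ℝ) ^ (s * (s + 1))))) := by
    intro j
    rw [← Finset.mul_sum, Finset.sum_add_distrib, ← Finset.sum_div, mul_assoc]
    simp only [Finset.sum_const, nsmul_eq_mul, Finset.card_univ]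
    apply mul_le_mul_of_nonneg_left _ (by positivity)
    have hpm : 1 ≤ p j * (m : ℝ) ^ (s * (s + 1)) := by
      simp only [hp]
      rw [← mul_pow, div_mul_cancel₀ _ hm'.ne']
      exact one_le_pow₀ (by have : (0 : ℝ) ≤ (j : ℕ) := by positivity
                            linarith)
    have hqm : q j ≤ 1 / m := by
      simp only [hq]
      apply mul_le_of_le_one_right (by positivity)
      apply pow_le_one₀ (by positivity)
      rw [div_le_one hm']
      exact_mod_cast j.2.le
    have hb : (∑ v : V, ∑ e ∈ E with v ∈ e, if Bad c e then (1 : ℝ) else 0) / (k * p j) ≤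
        n * (((s : ℝ) + 1) ^ 2 * δ * (m : ℝ) ^ (s * (s + 1))) := by
      rw [div_le_iff₀ (mul_pos hk' (hp0 j))]
      refine hB.trans ?_
      have : (0 : ℝ) ≤ (s + 1) ^ 2 * n * (δ * k) := by positivity
      nlinarith
    have hb0 : 0 ≤ (∑ v : V, ∑ e ∈ E with v ∈ e, if Bad c e then (1 : ℝ) else 0) / (k * p j) := by
      apply div_nonneg _ (mul_pos hk' (hp0 j)).le
      exact Finset.sum_nonneg fun v _ => Finset.sum_nonneg fun e _ => by split_ifs <;> norm_num
    have := mul_le_mul hqm hb hb0 (by positivity)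
    nlinarith
  rw [h1]
  calc _ ≤ ∑ v : V, ∑ j : Fin m, (m : ℝ) ^ Fintype.card V * q j *
        ((∑ e ∈ E with v ∈ e, if Bad c e then (1 : ℝ) else 0) / (k * p j) + Real.log (p j)) :=
        Finset.sum_le_sum fun v _ => Finset.sum_le_sum fun j _ => h2 v j
    _ = ∑ j : Fin m, ∑ v : V, (m : ℝ) ^ Fintype.card V * q j *
        ((∑ e ∈ E with v ∈ e, if Bad c e then (1 : ℝ) else 0) / (k * p j) + Real.log (p j)) :=
        Finset.sum_comm
    _ ≤ _ := Finset.sum_le_sum fun j _ => h3 j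
    _ = _ := by
      rw [← Finset.mul_sum, ← Finset.mul_sum, Finset.sum_add_distrib]
      congr 3
      · rw [Finset.mul_sum, ← Fin.sum_univ_eq_sum_range (fun j : ℕ => (s : ℝ) * (s + 1) *
          ((1 / m : ℝ) * (((j : ℝ) / m) ^ s * Real.log (((j : ℝ) + 1) / m))))]
        apply Finset.sum_congr rfl
        intro j _
        simp only [hp, hq, Real.log_pow]
        push_cast; ring
      · simp only [Finset.sum_const, nsmul_eq_mul, Finset.card_univ, Fintype.card_fin]
        field_simp
end
/-! ### A Riemann sum -/

/-- The increment of the antiderivative `x ^ (s + 1) * log x / (s + 1) - x ^ (s + 1) / (s + 1) ^ 2` of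
`x ^ s * log x` over `[j / m, (j + 1) / m]` is almost as large as the corresponding term of the
Riemann sum. -/
lemma riemann_step (s : ℕ) (hs : 1 ≤ s) (m j : ℕ) (hj : j < m) :
    (1 / m : ℝ) * (((j : ℝ) / m) ^ s * Real.log (((j : ℝ) + 1) / m)
        - 1 / m - s * (Real.log m / m)) ≤
      ((((j + 1 : ℕ) : ℝ) / m) ^ (s + 1) * Real.log (((j + 1 : ℕ) : ℝ) / m) / (s + 1)
          - (((j + 1 : ℕ) : ℝ) / m) ^ (s + 1) / (s + 1) ^ 2)
        - (((j : ℝ) / m) ^ (s + 1) * Real.log ((j : ℝ) / m) / (s + 1)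
          - ((j : ℝ) / m) ^ (s + 1) / (s + 1) ^ 2) := by
  have hm1 : (1 : ℝ) ≤ m := by exact_mod_cast (show 1 ≤ m by omega)
  have hm : (0 : ℝ) < m := by linarith
  have hs' : (1 : ℝ) ≤ s := by exact_mod_cast hs
  have hlogm : 0 ≤ Real.log m := Real.log_nonneg hm1
  rcases Nat.eq_zero_or_pos j with rfl | hj0
  · have h1 : ((1 : ℝ) / m) ^ (s + 1) ≤ (1 / m) * (1 / m) := by
      rw [← pow_two]
      exact pow_le_pow_of_le_one (by positivity) (by rw [div_le_one hm]; exact hm1) (by omega)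
    have h0 : 0 ≤ ((1 : ℝ) / m) ^ (s + 1) := by positivity
    have hl : Real.log (1 / m) = - Real.log m := by rw [one_div, Real.log_inv]
    simp only [Nat.cast_zero, zero_div, zero_add, Nat.cast_one, hl]
    rw [zero_pow (by omega), zero_pow (by omega)]
    have h2 : ((1 : ℝ) / m) ^ (s + 1) * (Real.log m / (s + 1) + 1 / (s + 1) ^ 2) ≤
        (1 / m) * (1 / m) * (Real.log m * s + 1) := by
      apply mul_le_mul h1 _ (by positivity) (by positivity)
      apply add_le_add
      · rw [div_le_iff₀ (by positivity)]
        nlinarith [mul_nonneg hlogm (show (0 : ℝ) ≤ s * (s + 1) - 1 by nlinarith)]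
      · rw [div_le_one (by positivity)]
        nlinarith
    have e1 : (1 / (m : ℝ)) * (0 * -Real.log m - 1 / m - s * (Real.log m / m)) =
      - ((1 / m) * (1 / m) * (Real.log m * s + 1)) := by ring
    have e2 : ((1 : ℝ) / m) ^ (s + 1) * -Real.log m / (s + 1) -
        ((1 : ℝ) / m) ^ (s + 1) / (s + 1) ^ 2 - (0 * Real.log 0 / ((s : ℝ) + 1) - 0 / ((s : ℝ) + 1) ^ 2)
        = - (((1 : ℝ) / m) ^ (s + 1) * (Real.log m / (s + 1) + 1 / (s + 1) ^ 2)) := by ring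
    rw [e1, e2]
    exact neg_le_neg h2
  · have hjr : (1 : ℝ) ≤ j := by exact_mod_cast hj0
    set a : ℝ := (j : ℝ) / m with ha
    set b : ℝ := ((j + 1 : ℕ) : ℝ) / m with hb
    have hba : b - a = 1 / m := by rw [ha, hb]; push_cast; ring
    have hb' : ((j : ℝ) + 1) / m = b := by rw [hb]; push_cast; rfl
    have ha0 : 0 < a := by positivity
    have ha1 : 1 / m ≤ a := by rw [ha]; gcongr
    have hab : a < b := by
      have : 0 < 1 / (m : ℝ) := by positivity
      linarith
    have hb1 : b ≤ 1 := by
      rw [hb, div_le_one hm]; exact_mod_cast hj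
    obtain ⟨c, hc, hcd⟩ := exists_hasDerivAt_eq_slope
      (fun x : ℝ => x ^ (s + 1) * Real.log x / (s + 1) - x ^ (s + 1) / (s + 1) ^ 2)
      (fun x : ℝ => x ^ s * Real.log x) hab
      (by
        intro x hx
        have hx0 : x ≠ 0 := (lt_of_lt_of_le ha0 hx.1).ne'
        apply ContinuousAt.continuousWithinAt
        have := Real.continuousAt_log hx0
        fun_prop)
      (by
        intro x hx
        have hx0 : x ≠ 0 := (lt_trans ha0 hx.1).ne'
        have h1 := (hasDerivAt_pow (s + 1) x)
        have h2 := ((h1.mul (Real.hasDerivAt_log hx0)).div_const ((s : ℝ) + 1)).sub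
          (h1.div_const (((s : ℝ) + 1) ^ 2))
        refine h2.congr_deriv ?_
        have : (s : ℝ) + 1 ≠ 0 := by positivity
        push_cast
        rw [pow_succ]
        field_simp
        ring)
    obtain ⟨hc1, hc2⟩ := hc
    have hc0 : 0 < c := lt_trans ha0 hc1
    have hkey : a ^ s * Real.log b - 1 / m - s * (Real.log m / m) ≤ c ^ s * Real.log c := by
      have hlogc : - Real.log m ≤ Real.log c := by
        rw [← Real.log_inv, ← one_div]
        exact Real.log_le_log (by positivity) (ha1.trans hc1.le)
      have hlogc0 : Real.log c ≤ 0 := Real.log_nonpos hc0.le (hc2.le.trans hb1)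
      have hp : c ^ s - a ^ s ≤ s * (1 / m) := by
        have := one_add_mul_le_pow (a := a / c - 1) (by
          have : 0 < a / c := by positivity
          linarith) s
        have hcs : 0 < c ^ s := by positivity
        have hcs1 : c ^ s ≤ c := by
          calc c ^ s ≤ c ^ 1 := pow_le_pow_of_le_one hc0.le (by linarith) hs
            _ = c := pow_one c
        rw [show 1 + (a / c - 1) = a / c by ring, div_pow, le_div_iff₀ hcs] at this
        have h3 : (1 - a / c) * c ^ s ≤ (1 - a / c) * c := by
          apply mul_le_mul_of_nonneg_left hcs1
          rw [sub_nonneg, div_le_one hc0]; exact hc1.le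
        have h4 : (1 - a / c) * c = c - a := by field_simp
        nlinarith
      have hp0 : 0 ≤ c ^ s - a ^ s := sub_nonneg.2 (pow_le_pow_left₀ ha0.le hc1.le s)
      have h5 : -(s * (1 / m) * Real.log m) ≤ (c ^ s - a ^ s) * Real.log c := by
        nlinarith [mul_le_mul hp (neg_le.1 hlogc) (by linarith) (by positivity)]
      have h6 : a ^ s * (Real.log b - Real.log c) ≤ 1 / m := by
        have hlb : Real.log b - Real.log c ≤ (1 / m) / a := by
          rw [← Real.log_div (by linarith) hc0.ne']
          have := Real.log_le_sub_one_of_pos (show 0 < b / c by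
            have : 0 < b := by linarith
            positivity)
          refine this.trans ?_
          rw [div_sub_one hc0.ne']
          rw [← hba]
          apply div_le_div₀ <;> linarith
        have has : a ^ s ≤ a := by
          calc a ^ s ≤ a ^ 1 := pow_le_pow_of_le_one ha0.le (by linarith) hs
            _ = a := pow_one a
        have hlb0 : 0 ≤ Real.log b - Real.log c :=
          sub_nonneg.2 (Real.log_le_log hc0 hc2.le)
        calc a ^ s * (Real.log b - Real.log c) ≤ a * ((1 / m) / a) :=
              mul_le_mul has hlb hlb0 ha0.le
          _ = 1 / m := by field_simp
      have : s * (1 / m) * Real.log m = s * (Real.log m / m) := by ring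
      nlinarith
    rw [eq_div_iff (by linarith), hba] at hcd
    rw [hb', ← hcd, mul_comm]
    exact mul_le_mul_of_nonneg_right hkey (by positivity)

/-- Here `-1 / (s + 1) ^ 2` is the integral of `x ^ s * log x` over `[0, 1]`. -/
lemma riemann_sum_le (s : ℕ) (hs : 1 ≤ s) (m : ℕ) (hm : 0 < m) :
    ∑ j ∈ Finset.range m, (1 / m : ℝ) * (((j : ℝ) / m) ^ s * Real.log (((j : ℝ) + 1) / m)) ≤
      - 1 / ((s : ℝ) + 1) ^ 2 + (1 / m + s * (Real.log m / m)) := by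
  have h := Finset.sum_le_sum (fun j hj => riemann_step s hs m j (Finset.mem_range.1 hj))
  rw [Finset.sum_range_sub (fun j : ℕ => ((j : ℝ) / m) ^ (s + 1) * Real.log ((j : ℝ) / m) / (s + 1)
          - ((j : ℝ) / m) ^ (s + 1) / (s + 1) ^ 2)] at h
  have hm' : (m : ℝ) ≠ 0 := by positivity
  simp only [div_self hm', Real.log_one, Nat.cast_zero, zero_div] at h
  rw [zero_pow (by omega)] at h
  simp only [mul_sub, Finset.sum_sub_distrib, Finset.sum_const, Finset.card_range, nsmul_eq_mul] at h
  have e1 : (m : ℝ) * (1 / m * (1 / m)) = 1 / m := by field_simp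
  have e2 : (m : ℝ) * (1 / m * (s * (Real.log m / m))) = s * (Real.log m / m) := by field_simp
  rw [e1, e2] at h
  simp only [one_pow, mul_zero, zero_mul, zero_div, sub_zero, zero_sub] at h
  have e3 : - 1 / ((s : ℝ) + 1) ^ 2 = - (1 / ((s : ℝ) + 1) ^ 2) := by ring
  rw [e3]
  linarith

lemma exists_riemann_sum_le (s : ℕ) (hs : 1 ≤ s) (η : ℝ) (hη : 0 < η) : ∃ m : ℕ, 0 < m ∧
    ∑ j ∈ Finset.range m, (1 / m : ℝ) * (((j : ℝ) / m) ^ s * Real.log (((j : ℝ) + 1) / m)) ≤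
      - 1 / ((s : ℝ) + 1) ^ 2 + η := by
  have h1 : Filter.Tendsto (fun m : ℕ => Real.log m / (m : ℝ)) Filter.atTop (nhds 0) :=
    (Real.isLittleO_log_id_atTop.tendsto_div_nhds_zero).comp tendsto_natCast_atTop_atTop
  have h2 : Filter.Tendsto (fun m : ℕ => 1 / (m : ℝ) + s * (Real.log m / (m : ℝ)))
      Filter.atTop (nhds 0) := by
    simpa using (tendsto_one_div_atTop_nhds_zero_nat (𝕜 := ℝ)).add (h1.const_mul (s : ℝ))
  obtain ⟨m, hm, hm0⟩ := ((h2.eventually (gt_mem_nhds hη)).and (Filter.eventually_gt_atTop 0)).exists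
  exact ⟨m, hm0, (riemann_sum_le s hs m hm0).trans (by linarith)⟩

/-! ### Averaging over labellings -/

section
variable {V α : Type} [Fintype V] [DecidableEq V] [LinearOrder α]

lemma cell_univ {E M : Finset (Finset V)} {s : ℕ} (hE : ∀ e ∈ E, e.card = s + 1)
    (hM : M ∈ PM E Finset.univ) : (∀ v, v ∈ cell M v) ∧
      (∀ u v, u ∈ cell M v → cell M u = cell M v) ∧ (∀ v, (cell M v).card = s + 1) ∧
      ∀ v, cell M v ∈ E := by
  obtain ⟨h1, h2, h3⟩ := (mem_PM _ _ _).1 hM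
  have h : ∀ v, ∃ g ∈ M, v ∈ g := fun v => (mem_union_iff M v).1 (h3 ▸ Finset.mem_univ v)
  refine ⟨fun v => ?_, fun u v hu => ?_, fun v => ?_, fun v => ?_⟩ <;> obtain ⟨g, hg, hv⟩ := h v
  · rwa [cell_eq h2 hg hv]
  · rw [cell_eq h2 hg hv] at hu ⊢
    exact cell_eq h2 hg hu
  · rw [cell_eq h2 hg hv]
    exact hE g (h1 hg)
  · rw [cell_eq h2 hg hv]
    exact h1 hg

lemma card_tops (r : V → α) (hr : Function.Injective r) {E M : Finset (Finset V)} {s : ℕ}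
    (hE : ∀ e ∈ E, e.card = s + 1) (hM : M ∈ PM E Finset.univ) :
    (tops r M).card * (s + 1) = Fintype.card V := by
  obtain ⟨c1, c2, c3, -⟩ := cell_univ hE hM
  have h3 := ((mem_PM _ _ _).1 hM).2.2
  have hcov : (Finset.univ : Finset V) = (tops r M).biUnion (cell M) := by
    symm
    rw [Finset.eq_univ_iff_forall]
    intro x
    obtain ⟨u, hu, hmax⟩ := Finset.exists_max_image (cell M x) r ⟨x, c1 x⟩
    rw [Finset.mem_biUnion]
    refine ⟨u, (mem_tops r M u).2 ⟨h3 ▸ Finset.mem_univ u, ?_⟩, ?_⟩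
    · rwa [c2 u x hu]
    · rw [c2 u x hu]; exact c1 x
  rw [← Finset.card_univ, hcov, Finset.card_biUnion, Finset.sum_congr rfl (fun v _ => c3 v),
    Finset.sum_const, smul_eq_mul]
  intro v hv w hw hvw
  change Disjoint (cell M v) (cell M w)
  rw [Finset.disjoint_left]
  intro x hxv hxw
  have e : cell M v = cell M w := by rw [← c2 x v hxv, c2 x w hxw]
  refine hvw (hr (le_antisymm ?_ ?_))
  · exact ((mem_tops r M w).1 hw).2 v (e ▸ c1 v)
  · exact ((mem_tops r M v).1 hv).2 w (e ▸ c1 w)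

/-- Every top contributes at most `log k`, and the strict tops of the labelling refined by `r` contribute
the savings `log (available / k) ≤ 0`, which are bounded by a tangent line of the logarithm. -/
lemma sum_log_avail_le {m s k : ℕ} (hk : 0 < k) (hm : 0 < m) (r : V → α)
    (hr : Function.Injective r) (l : V → Fin m) (hl : ∀ u v, r u ≤ r v → l u ≤ l v)
    {E M : Finset (Finset V)}
    (hE : ∀ e ∈ E, e.card = s + 1) (hdeg : ∀ v : V, (E.filter (fun e => v ∈ e)).card = k)
    (hM : M ∈ PM E Finset.univ) :
    ∑ x ∈ tops r M, Real.log (avail r E M x).card ≤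
      (Fintype.card V : ℝ) / (s + 1) * Real.log k + ∑ v ∈ strictTops (cell M) l,
      (((availL (cell M) E l v).card : ℝ) / (k * (((l v : ℝ) + 1) / m) ^ (s * (s + 1))) - 1
        + Real.log ((((l v : ℝ) + 1) / m) ^ (s * (s + 1)))) := by
  obtain ⟨c1, c2, c3, c4⟩ := cell_univ hE hM
  have h3 := ((mem_PM _ _ _).1 hM).2.2
  have hk' : (0 : ℝ) < k := by exact_mod_cast hk
  have hm' : (0 : ℝ) < m := by exact_mod_cast hm
  have hsub : strictTops (cell M) l ⊆ tops r M := by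
    intro v hv
    refine (mem_tops r M v).2 ⟨h3 ▸ Finset.mem_univ v, fun u hu => ?_⟩
    by_cases huv : u = v
    · rw [huv]
    · by_contra hlt
      exact absurd (hl v u (not_le.1 hlt).le) (not_le.2 ((Finset.mem_filter.1 hv).2 u hu huv))
  have hle : ∀ x, ((avail r E M x).card : ℝ) ≤ k := by
    intro x
    rw [← hdeg x]
    refine Nat.cast_le.2 (Finset.card_le_card fun e he => ?_)
    obtain ⟨a, b, -⟩ := (mem_avail r E M x e).1 he
    exact Finset.mem_filter.2 ⟨a, b⟩
  have hpos : ∀ x ∈ tops r M, (0 : ℝ) < ((avail r E M x).card : ℝ) := by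
    intro x hx
    have : cell M x ∈ avail r E M x := by
      refine (mem_avail r E M x _).2 ⟨c4 x, c1 x, h3 ▸ Finset.subset_univ _, fun w hw u hu => ?_⟩
      rw [c2 w x hw] at hu
      exact ((mem_tops r M x).1 hx).2 u hu
    exact_mod_cast Finset.card_pos.2 ⟨_, this⟩
  have hsplit : ∑ x ∈ tops r M, Real.log (avail r E M x).card =
      (Fintype.card V : ℝ) / (s + 1) * Real.log k +
        ∑ x ∈ tops r M, Real.log ((avail r E M x).card / k) := by
    have h : ∀ x ∈ tops r M, Real.log ((avail r E M x).card / k) =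
        Real.log (avail r E M x).card - Real.log k := fun x hx =>
      Real.log_div (hpos x hx).ne' hk'.ne'
    rw [Finset.sum_congr rfl h, Finset.sum_sub_distrib, Finset.sum_const, nsmul_eq_mul,
      ← card_tops r hr hE hM]
    have : (s : ℝ) + 1 ≠ 0 := by positivity
    push_cast
    field_simp
    ring
  rw [hsplit]
  refine add_le_add le_rfl ?_
  calc _ ≤ ∑ x ∈ strictTops (cell M) l, Real.log ((avail r E M x).card / k) := by
        rw [← Finset.sum_sdiff hsub]
        apply add_le_of_nonpos_left
        refine Finset.sum_nonpos fun x _ => Real.log_nonpos (by positivity) ?_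
        rw [div_le_one hk']
        exact hle x
    _ ≤ _ := by
      apply Finset.sum_le_sum
      intro v hv
      set p : ℝ := (((l v : ℝ) + 1) / m) ^ (s * (s + 1)) with hp
      have hp0 : 0 < p := by positivity
      have hN := hpos v (hsub hv)
      have hNN : ((avail r E M v).card : ℝ) ≤ (availL (cell M) E l v).card := by
        refine Nat.cast_le.2 (Finset.card_le_card fun e he => ?_)
        obtain ⟨a, b, -, c⟩ := (mem_avail r E M v e).1 he
        exact Finset.mem_filter.2 ⟨a, b, fun w hw u hu => hl _ _ (c w hw u hu)⟩
      have h := Real.log_le_sub_one_of_pos (show 0 < ((avail r E M v).card : ℝ) / (k * p) by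
        positivity)
      have e : ((avail r E M v).card : ℝ) / k = (avail r E M v).card / (k * p) * p := by
        field_simp
      rw [e, Real.log_mul (by positivity) hp0.ne']
      have h' : ((avail r E M v).card : ℝ) / (k * p) ≤ (availL (cell M) E l v).card / (k * p) :=
        div_le_div_of_nonneg_right hNN (by positivity)
      linarith

/-- The average over all labellings, for a fixed number `m` of labels. -/
lemma log_card_le {m s k : ℕ} (hs : 1 ≤ s) (hk : 0 < k) (δ : ℝ) (hδ : 0 ≤ δ) (hm : 0 < m)
    (E : Finset (Finset V)) (hE : ∀ e ∈ E, e.card = s + 1)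
    (hdeg : ∀ v : V, (E.filter (fun e => v ∈ e)).card = k)
    (hco : ∀ u v : V, u ≠ v → ((E.filter (fun e => u ∈ e ∧ v ∈ e)).card : ℝ) ≤ δ * k)
    (hne : (PM E Finset.univ).Nonempty) :
    Real.log (PM E Finset.univ).card ≤ (Fintype.card V : ℝ) / (s + 1) * Real.log k +
      Fintype.card V * ((s : ℝ) * (s + 1) *
      ∑ j ∈ Finset.range m, (1 / m : ℝ) * (((j : ℝ) / m) ^ s * Real.log (((j : ℝ) + 1) / m)) +
      ((s : ℝ) + 1) ^ 2 * δ * (m : ℝ) ^ (s * (s + 1))) := by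
  have hEne : ∀ e ∈ E, e.Nonempty := fun e he => Finset.card_pos.1 (by rw [hE e he]; omega)
  have hm' : (0 : ℝ) < m := by exact_mod_cast hm
  have hT : (0 : ℝ) < ((PM E Finset.univ).card : ℝ) := by exact_mod_cast hne.card_pos
  set T : ℝ := ((PM E Finset.univ).card : ℝ) with hTdef
  set R : ℝ := Fintype.card V * ((s : ℝ) * (s + 1) *
      ∑ j ∈ Finset.range m, (1 / m : ℝ) * (((j : ℝ) / m) ^ s * Real.log (((j : ℝ) + 1) / m)) +
      ((s : ℝ) + 1) ^ 2 * δ * (m : ℝ) ^ (s * (s + 1))) with hR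
  have h1 : ∀ l : V → Fin m, T * Real.log T ≤ ∑ M ∈ PM E Finset.univ,
      ((Fintype.card V : ℝ) / (s + 1) * Real.log k + ∑ v ∈ strictTops (cell M) l,
      (((availL (cell M) E l v).card : ℝ) / (k * (((l v : ℝ) + 1) / m) ^ (s * (s + 1))) - 1
        + Real.log ((((l v : ℝ) + 1) / m) ^ (s * (s + 1))))) := by
    intro l
    -- ties between equal labels are broken by an enumeration of the vertices
    set r : V → Fin m ×ₗ Fin (Fintype.card V) := fun v => toLex (l v, Fintype.equivFin V v) with hr
    have hrinj : Function.Injective r := by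
      intro u v huv
      have := congrArg (fun x => (ofLex x).2) huv
      exact (Fintype.equivFin V).injective this
    have hrl : ∀ u v, r u ≤ r v → l u ≤ l v := by
      intro u v huv
      rw [Prod.Lex.le_iff] at huv
      rcases huv with h | h
      · exact h.le
      · exact h.1.le
    refine (card_log_card_le r hrinj E hEne Finset.univ).trans (Finset.sum_le_sum fun M hM => ?_)
    exact sum_log_avail_le hk hm r hrinj l hrl hE hdeg hM
  have h2 := Finset.sum_le_sum (s := (Finset.univ : Finset (V → Fin m))) (fun l _ => h1 l)
  rw [Finset.sum_comm] at h2
  simp only [Finset.sum_add_distrib (s := (Finset.univ : Finset (V → Fin m))),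
    Finset.sum_const, nsmul_eq_mul, Finset.card_univ, Fintype.card_fun, Fintype.card_fin] at h2
  have h3 := Finset.sum_le_sum (fun M (hM : M ∈ PM E Finset.univ) =>
    add_le_add_right (sum_strictTops_le hs hk δ hδ hm (cell M) (cell_univ hE hM).1
      (cell_univ hE hM).2.1 (cell_univ hE hM).2.2.1 E hE hdeg hco)
      ((m : ℝ) ^ Fintype.card V * ((Fintype.card V : ℝ) / (s + 1) * Real.log k)))
  rw [← hR, Finset.sum_const, nsmul_eq_mul, ← hTdef] at h3
  push_cast at h2
  have h4 := h2.trans h3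
  have hpos : 0 < (m : ℝ) ^ Fintype.card V * T := by positivity
  refine le_of_mul_le_mul_left ?_ hpos
  linarith
end

theorem perfect_matchings_upper_bound :
    ∀ d : ℕ, 2 ≤ d → ∀ ε : ℝ, 0 < ε →
      ∃ δ : ℝ, 0 < δ ∧ ∃ K : ℕ, ∀ k : ℕ, K ≤ k →
        ∀ (V : Type) [Fintype V] [DecidableEq V] (n : ℕ), Fintype.card V = n →
          ∀ E : Finset (Finset V),
            (∀ e ∈ E, e.card = d) →
            (∀ v : V, (E.filter (fun e => v ∈ e)).card = k) →
            (∀ u v : V, u ≠ v →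
              ((E.filter (fun e => u ∈ e ∧ v ∈ e)).card : ℝ) ≤ δ * k) →
            (Nat.card {M : Finset (Finset V) // M ⊆ E ∧
                (∀ e ∈ M, ∀ f ∈ M, e ≠ f → Disjoint e f) ∧
                M.sup id = Finset.univ} : ℝ) ≤
              ((1 + ε) * k / Real.exp ((d : ℝ) - 1)) ^ ((n : ℝ) / (d : ℝ)) := by
  intro d hd ε hε
  obtain ⟨s, rfl⟩ : ∃ s, d = s + 1 := ⟨d - 1, by omega⟩
  have hs : 1 ≤ s := by omega
  have hs0 : (0 : ℝ) < s := by exact_mod_cast hs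
  have hL : 0 < Real.log (1 + ε) := Real.log_pos (by linarith)
  obtain ⟨m, hm, hS⟩ := exists_riemann_sum_le s hs
    (Real.log (1 + ε) / (2 * s * (s + 1) ^ 2)) (by positivity)
  have hm' : (0 : ℝ) < m := by exact_mod_cast hm
  refine ⟨Real.log (1 + ε) / (2 * (s + 1) ^ 3 * (m : ℝ) ^ (s * (s + 1))), by positivity, 1, ?_⟩
  intro k hk V _ _ n hn E hE hdeg hco
  have hk' : (0 : ℝ) < k := by exact_mod_cast hk
  have hcard : Nat.card {M : Finset (Finset V) // M ⊆ E ∧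
      (∀ e ∈ M, ∀ f ∈ M, e ≠ f → Disjoint e f) ∧ M.sup id = Finset.univ} =
      (PM E Finset.univ).card := by
    rw [← Nat.card_eq_finsetCard]
    exact Nat.card_congr (Equiv.subtypeEquivRight fun M => (mem_PM E M Finset.univ).symm)
  rw [hcard]
  have hbase : 0 < (1 + ε) * k / Real.exp (((s + 1 : ℕ) : ℝ) - 1) := by positivity
  rcases (PM E (Finset.univ : Finset V)).eq_empty_or_nonempty with h0 | hne
  · rw [h0, Finset.card_empty, Nat.cast_zero]
    exact (Real.rpow_pos_of_pos hbase _).le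
  have h := log_card_le hs hk _ (by positivity) hm E hE hdeg hco hne
  rw [hn] at h
  have hT : (0 : ℝ) < ((PM E (Finset.univ : Finset V)).card : ℝ) := by
    exact_mod_cast hne.card_pos
  rw [← Real.log_le_log_iff hT (Real.rpow_pos_of_pos hbase _), Real.log_rpow hbase,
    Real.log_div (by positivity) (Real.exp_pos _).ne', Real.log_exp,
    Real.log_mul (by positivity) hk'.ne']
  refine h.trans ?_
  have h5 := mul_le_mul_of_nonneg_left hS (show 0 ≤ (s : ℝ) * (s + 1) by positivity)
  have e1 : (s : ℝ) * (s + 1) * (-1 / ((s : ℝ) + 1) ^ 2 +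
      Real.log (1 + ε) / (2 * s * (s + 1) ^ 2)) =
      (-s + Real.log (1 + ε) / 2) / (s + 1) := by
    field_simp
  have e2 : ((s : ℝ) + 1) ^ 2 * (Real.log (1 + ε) / (2 * (s + 1) ^ 3 * (m : ℝ) ^ (s * (s + 1)))) *
      (m : ℝ) ^ (s * (s + 1)) = (Real.log (1 + ε) / 2) / (s + 1) := by
    field_simp
  rw [e1] at h5
  rw [e2]
  have h6 := mul_le_mul_of_nonneg_left (add_le_add_left h5 ((Real.log (1 + ε) / 2) / (s + 1)))
    (show (0 : ℝ) ≤ n by positivity)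
  refine (add_le_add_right h6 _).trans_eq ?_
  push_cast
  field_simp
  ring
end
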